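/- arXiv:1811.03843 — 2 statements merged into one kernel-verified Lean document; each statement's English description precedes it below -/
import Mathlib

section
/- For all integers k, l, x, y ≥ 1, the relation [C^k A^l, C^x A^y] = (m^{lx} − m^{ky})·C^{k+x} A^{l+y} holds in R. -/
noncomputable section

open FreeAlgebra

/-- The defining relation `A*B = m • (B*A) + b·1` on the free algebra `F⟨A,B⟩`
(the free unital associative algebra on two generators `A = ι F 0`, `B = ι F 1`). -/
def twistRel (F : Type*) [Field F] (m b : F) :
    FreeAlgebra F (Fin 2) → FreeAlgebra F (Fin 2) → Prop :=
  fun p q => p = ι F 0 * ι F 1 ∧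
    q = m • (ι F 1 * ι F 0) + algebraMap F (FreeAlgebra F (Fin 2)) b

/-- `R = F⟨A,B⟩ / (AB − m·BA − b·1)`. -/
abbrev TwistAlg (F : Type*) [Field F] (m b : F) := RingQuot (twistRel F m b)

/-- The image of the generator `A` in `R`. -/
def genA (F : Type*) [Field F] (m b : F) : TwistAlg F m b :=
  RingQuot.mkAlgHom F (twistRel F m b) (ι F 0)

/-- The image of the generator `B` in `R`. -/
def genB (F : Type*) [Field F] (m b : F) : TwistAlg F m b :=
  RingQuot.mkAlgHom F (twistRel F m b) (ι F 1)

/-- `C := A*B − B*A` in `R`. -/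
def genC (F : Type*) [Field F] (m b : F) : TwistAlg F m b :=
  genA F m b * genB F m b - genB F m b * genA F m b
/-! Since `A * B - m • (B * A)` commutes with `A`, the derivation `⁅A, ·⁆` kills it, so
`A * C = ⁅A, A * B⁆ = m • ⁅A, B * A⁆ = m • (C * A)` for `C = ⁅A, B⁆`. Hence moving `A ^ l` past
`C ^ x` costs the scalar `m ^ (l * x)`, and both products in the commutator are multiples of the
same monomial. -/

section SkewCommuting

variable {S M : Type*} [Monoid S] [Monoid M] [MulAction S M] [IsScalarTower S M M]
  [SMulCommClass S M M] {q : S} {a c : M}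

theorem semiconjBy_pow_left_smul (h : SemiconjBy a c (q • c)) (l : ℕ) :
    SemiconjBy (a ^ l) c (q ^ l • c) := by
  induction l with
  | zero => simp
  | succ l ih =>
    have h_scaled : SemiconjBy a (q ^ l • c) (q ^ (l + 1) • c) := by
      simpa only [pow_succ, mul_smul] using h.smul_right (q ^ l)
    rw [pow_succ' a]
    exact h_scaled.mul_left ih

theorem pow_mul_pow_of_semiconjBy_smul (h : SemiconjBy a c (q • c)) (l x : ℕ) :
    a ^ l * c ^ x = q ^ (l * x) • (c ^ x * a ^ l) := by
  rw [((semiconjBy_pow_left_smul h l).pow_right x).eq, smul_pow, ← pow_mul, smul_mul_assoc]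

theorem monomial_mul_monomial_of_semiconjBy_smul (h : SemiconjBy a c (q • c)) (k l x y : ℕ) :
    c ^ k * a ^ l * (c ^ x * a ^ y) = q ^ (l * x) • (c ^ (k + x) * a ^ (l + y)) :=
  calc
    c ^ k * a ^ l * (c ^ x * a ^ y) = c ^ k * (a ^ l * c ^ x) * a ^ y := by
      simp only [mul_assoc]
    _ = q ^ (l * x) • (c ^ k * (c ^ x * a ^ l) * a ^ y) := by
      rw [pow_mul_pow_of_semiconjBy_smul h, mul_smul_comm, smul_mul_assoc]
    _ = q ^ (l * x) • (c ^ (k + x) * a ^ (l + y)) := by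
      simp only [pow_add, mul_assoc]

end SkewCommuting

section Commutator

variable {F R : Type*} [CommRing F] [Ring R] [Algebra F R] {m : F} {A B C Z : R}

theorem semiconjBy_lie_smul_lie (hAB : A * B = m • (B * A) + Z) (hZ : Commute A Z) :
    SemiconjBy A ⁅A, B⁆ (m • ⁅A, B⁆) :=
  calc
    A * ⁅A, B⁆ = ⁅A, A * B⁆ := by simp only [Ring.lie_def, mul_sub, mul_assoc]
    _ = m • ⁅A, B * A⁆ := by
      simp only [hAB, Ring.lie_def, mul_add, add_mul, mul_smul_comm, smul_mul_assoc, hZ.eq,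
        add_sub_add_right_eq_sub, smul_sub]
    _ = m • ⁅A, B⁆ * A := by simp only [Ring.lie_def, smul_mul_assoc, sub_mul, mul_assoc]

theorem lie_monomial_monomial_of_semiconjBy_smul (h : SemiconjBy A C (m • C)) (k l x y : ℕ) :
    ⁅C ^ k * A ^ l, C ^ x * A ^ y⁆ =
      (m ^ (l * x) - m ^ (k * y)) • (C ^ (k + x) * A ^ (l + y)) := by
  rw [Ring.lie_def, monomial_mul_monomial_of_semiconjBy_smul h,
    monomial_mul_monomial_of_semiconjBy_smul h, add_comm x k, add_comm y l, mul_comm y k, sub_smul]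

theorem stmt8_general (hAB : A * B = m • (B * A) + Z) (hZ : Commute A Z) (k l x y : ℕ) :
    ⁅⁅A, B⁆ ^ k * A ^ l, ⁅A, B⁆ ^ x * A ^ y⁆ =
      (m ^ (l * x) - m ^ (k * y)) • (⁅A, B⁆ ^ (k + x) * A ^ (l + y)) :=
  lie_monomial_monomial_of_semiconjBy_smul (semiconjBy_lie_smul_lie hAB hZ) k l x y

end Commutator

theorem genA_mul_genB (F : Type*) [Field F] (m b : F) :
    genA F m b * genB F m b =
      m • (genB F m b * genA F m b) + algebraMap F (TwistAlg F m b) b := by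
  simpa only [genA, genB, map_mul, map_add, map_smul, AlgHom.commutes] using
    RingQuot.mkAlgHom_rel F (s := twistRel F m b) ⟨rfl, rfl⟩

theorem stmt8 (F : Type*) [Field F] (m b : F) (hm0 : m ≠ 0) (hm1 : m ≠ 1)
    (k l x y : ℕ) (hk : 1 ≤ k) (hl : 1 ≤ l) (hx : 1 ≤ x) (hy : 1 ≤ y) :
    ⁅genC F m b ^ k * genA F m b ^ l, genC F m b ^ x * genA F m b ^ y⁆ =
      (m ^ (l * x) - m ^ (k * y)) • (genC F m b ^ (k + x) * genA F m b ^ (l + y)) :=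
  stmt8_general (genA_mul_genB F m b) (Algebra.commute_algebraMap_right b _) k l x y
end
end

section
/- For all integers u, v, x, y ≥ 1, the element [C^u A^v, B^y C^x] of R lies in the F-linear span of the set {C^k : k ≥ 1} ∪ {C^k A^l : k, l ≥ 1} ∪ {B^l C^k : k, l ≥ 1}. -/
noncomputable section

open FreeAlgebra

/-!
Write `C = ⁅A, B⁆`. It commutes with both generators up to scalars, `A C = m C A` and `C B = m B C`,
while `(m - 1) B A = C - b` and `(m - 1) A B = m C - b`. Hence left multiplication by `A` or `B`
sends each spanning monomial `C ^ k A ^ l`, `B ^ l C ^ k` with `k ≥ 1` either to a multiple of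
another one or, after one cancellation of `A B` or `B A`, to a combination of two of them. So the
span is stable under left multiplication by `A` and `B`, and both products in the commutator have
the form (polynomial in `A` and `B`) * (spanning monomial).
-/

theorem mul_mem_of_mem_adjoin {K R : Type*} [CommSemiring K] [Semiring R] [Algebra K R] {s : Set R}
    {N : Submodule K R} (hN : ∀ a ∈ s, ∀ w ∈ N, a * w ∈ N) {p w : R}
    (hp : p ∈ Algebra.adjoin K s) (hw : w ∈ N) : p * w ∈ N := by
  induction hp using Algebra.adjoin_induction generalizing w with
  | mem a ha => exact hN a ha w hw
  | algebraMap r => simpa only [Algebra.algebraMap_eq_smul_one, smul_one_mul] using N.smul_mem r hw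
  | add p q _ _ ihp ihq => simpa only [add_mul] using N.add_mem (ihp hw) (ihq hw)
  | mul p q _ _ ihp ihq => simpa only [mul_assoc] using ihp (ihq hw)

section NormalSpan

variable {K R : Type*} [CommSemiring K] [Semiring R] [Algebra K R] {A B C : R}

/-- The span of the normally ordered monomials with a factor `C`: the `C ^ k`, `C ^ k * A ^ l` and
`B ^ l * C ^ k` with `k, l ≥ 1`. In the algebra of the theorem it is the ideal generated by `C`. -/
def normalSpan (K : Type*) {R : Type*} [CommSemiring K] [Semiring R] [Algebra K R] (A B C : R) :
    Submodule K R :=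
  Submodule.span K
    ({w | ∃ k : ℕ, 1 ≤ k ∧ w = C ^ k} ∪
     {w | ∃ k l : ℕ, 1 ≤ k ∧ 1 ≤ l ∧ w = C ^ k * A ^ l} ∪
     {w | ∃ k l : ℕ, 1 ≤ k ∧ 1 ≤ l ∧ w = B ^ l * C ^ k})

theorem pow_mul_pow_mem_normalSpan_left {k : ℕ} (hk : 1 ≤ k) (l : ℕ) :
    C ^ k * A ^ l ∈ normalSpan K A B C := by
  apply Submodule.subset_span
  rcases l.eq_zero_or_pos with rfl | hl
  · exact .inl (.inl ⟨k, hk, by rw [pow_zero, mul_one]⟩)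
  · exact .inl (.inr ⟨k, l, hk, hl, rfl⟩)

theorem pow_mul_pow_mem_normalSpan_right {k : ℕ} (hk : 1 ≤ k) (l : ℕ) :
    B ^ l * C ^ k ∈ normalSpan K A B C := by
  apply Submodule.subset_span
  rcases l.eq_zero_or_pos with rfl | hl
  · exact .inl (.inl ⟨k, hk, by rw [pow_zero, one_mul]⟩)
  · exact .inr ⟨k, l, hk, hl, rfl⟩

theorem mul_mem_of_mem_normalSpan {N : Submodule K R} {a w : R}
    (hA : ∀ k l, 1 ≤ k → a * (C ^ k * A ^ l) ∈ N) (hB : ∀ k l, 1 ≤ k → a * (B ^ l * C ^ k) ∈ N)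
    (hw : w ∈ normalSpan K A B C) : a * w ∈ N := by
  suffices normalSpan K A B C ≤ N.comap (LinearMap.mulLeft K a) from this hw
  refine Submodule.span_le.mpr ?_
  rintro _ ((⟨k, hk, rfl⟩ | ⟨k, l, hk, -, rfl⟩) | ⟨k, l, hk, -, rfl⟩)
  · simpa using hA k 0 hk
  · exact hA k l hk
  · exact hB k l hk

end NormalSpan

/-- The pair `(A, B)` satisfies the defining relation `A B = m B A + b` of `TwistAlg`, in an
arbitrary algebra over a commutative ring. -/
def IsTwistPair {K R : Type*} [CommRing K] [Ring R] [Algebra K R] (m b : K) (A B : R) : Prop :=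
  A * B = m • (B * A) + algebraMap K R b

namespace IsTwistPair

variable {K R : Type*} [CommRing K] [Ring R] [Algebra K R] {m b : K} {A B : R}

theorem smul_right_mul_left_eq (h : IsTwistPair m b A B) :
    (m - 1) • (B * A) = ⁅A, B⁆ - algebraMap K R b := by
  rw [Ring.lie_def, h]
  module

theorem smul_left_mul_right_eq (h : IsTwistPair m b A B) :
    (m - 1) • (A * B) = m • ⁅A, B⁆ - algebraMap K R b := by
  rw [Ring.lie_def, h, Algebra.algebraMap_eq_smul_one]
  module

theorem lie_eq (h : IsTwistPair m b A B) : ⁅A, B⁆ = (m - 1) • (B * A) + algebraMap K R b :=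
  sub_eq_iff_eq_add.mp h.smul_right_mul_left_eq.symm

theorem semiconjBy_lie (h : IsTwistPair m b A B) : SemiconjBy A ⁅A, B⁆ (m • ⁅A, B⁆) := by
  calc A * ⁅A, B⁆ = ((m - 1) • (A * B) + algebraMap K R b) * A := by
        rw [h.lie_eq, mul_add, add_mul, mul_smul_comm, smul_mul_assoc, mul_assoc,
          Algebra.commutes b A]
    _ = m • ⁅A, B⁆ * A := by rw [h.smul_left_mul_right_eq, sub_add_cancel]

theorem semiconjBy_smul_lie (h : IsTwistPair m b A B) : SemiconjBy B (m • ⁅A, B⁆) ⁅A, B⁆ := by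
  calc B * (m • ⁅A, B⁆) = B * ((m - 1) • (A * B) + algebraMap K R b) := by
        rw [h.smul_left_mul_right_eq, sub_add_cancel]
    _ = ⁅A, B⁆ * B := by
        rw [h.lie_eq, mul_add, add_mul, mul_smul_comm, smul_mul_assoc, mul_assoc,
          Algebra.commutes b B]

theorem mul_lie_pow (h : IsTwistPair m b A B) (k : ℕ) :
    A * ⁅A, B⁆ ^ k = m ^ k • (⁅A, B⁆ ^ k * A) := by
  rw [(h.semiconjBy_lie.pow_right k).eq, smul_pow, smul_mul_assoc]

theorem smul_mul_lie_pow (h : IsTwistPair m b A B) (k : ℕ) :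
    m ^ k • (B * ⁅A, B⁆ ^ k) = ⁅A, B⁆ ^ k * B := by
  rw [← (h.semiconjBy_smul_lie.pow_right k).eq, smul_pow, mul_smul_comm]

theorem lie_mul_pow (h : IsTwistPair m b A B) (l : ℕ) :
    ⁅A, B⁆ * B ^ l = m ^ l • (B ^ l * ⁅A, B⁆) := by
  have hCB : SemiconjBy ⁅A, B⁆ B (m • B) := by
    rw [SemiconjBy, ← h.semiconjBy_smul_lie.eq, mul_smul_comm, smul_mul_assoc]
  rw [(hCB.pow_right l).eq, smul_pow, smul_mul_assoc]

theorem smul_left_mul_pow_mul_lie_pow (h : IsTwistPair m b A B) (k l : ℕ) :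
    (m - 1) • (A * (B ^ (l + 1) * ⁅A, B⁆ ^ k)) =
      m ^ (l + 1) • (B ^ l * ⁅A, B⁆ ^ (k + 1)) - b • (B ^ l * ⁅A, B⁆ ^ k) := by
  calc (m - 1) • (A * (B ^ (l + 1) * ⁅A, B⁆ ^ k))
      = (m - 1) • (A * B) * B ^ l * ⁅A, B⁆ ^ k := by
        simp only [pow_succ', smul_mul_assoc, mul_assoc]
    _ = m • (⁅A, B⁆ * B ^ l) * ⁅A, B⁆ ^ k - b • (B ^ l * ⁅A, B⁆ ^ k) := by
        simp only [h.smul_left_mul_right_eq, Algebra.algebraMap_eq_smul_one, sub_mul,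
          smul_mul_assoc, one_mul]
    _ = m ^ (l + 1) • (B ^ l * ⁅A, B⁆ ^ (k + 1)) - b • (B ^ l * ⁅A, B⁆ ^ k) := by
        simp only [h.lie_mul_pow, pow_succ', smul_mul_assoc, mul_assoc, smul_smul]

theorem smul_right_mul_lie_pow_mul_pow (h : IsTwistPair m b A B) (k l : ℕ) :
    (m ^ k * (m - 1)) • (B * (⁅A, B⁆ ^ k * A ^ (l + 1))) =
      ⁅A, B⁆ ^ (k + 1) * A ^ l - b • (⁅A, B⁆ ^ k * A ^ l) := by
  calc (m ^ k * (m - 1)) • (B * (⁅A, B⁆ ^ k * A ^ (l + 1)))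
      = (m - 1) • (m ^ k • (B * ⁅A, B⁆ ^ k) * A ^ (l + 1)) := by
        rw [mul_comm, mul_smul, smul_mul_assoc, mul_assoc]
    _ = ⁅A, B⁆ ^ k * ((m - 1) • (B * A)) * A ^ l := by
        simp only [h.smul_mul_lie_pow, pow_succ', mul_assoc, mul_smul_comm, smul_mul_assoc]
    _ = ⁅A, B⁆ ^ (k + 1) * A ^ l - b • (⁅A, B⁆ ^ k * A ^ l) := by
        simp only [h.smul_right_mul_left_eq, Algebra.algebraMap_eq_smul_one, mul_sub, sub_mul,
          mul_smul_comm, smul_mul_assoc, mul_one, pow_succ]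

theorem left_mul_mem_normalSpan (h : IsTwistPair m b A B) (hm1 : IsUnit (m - 1)) {w : R}
    (hw : w ∈ normalSpan K A B ⁅A, B⁆) : A * w ∈ normalSpan K A B ⁅A, B⁆ := by
  have hA (k l : ℕ) (hk : 1 ≤ k) : A * (⁅A, B⁆ ^ k * A ^ l) ∈ normalSpan K A B ⁅A, B⁆ := by
    rw [← mul_assoc, h.mul_lie_pow, smul_mul_assoc, mul_assoc, ← pow_succ']
    exact Submodule.smul_mem _ _ (pow_mul_pow_mem_normalSpan_left hk _)
  refine mul_mem_of_mem_normalSpan hA (fun k l hk => ?_) hw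
  cases l with
  | zero => simpa using hA k 0 hk
  | succ l =>
    rw [← Submodule.smul_mem_iff_of_isUnit _ hm1, h.smul_left_mul_pow_mul_lie_pow]
    exact Submodule.sub_mem _
      (Submodule.smul_mem _ _ (pow_mul_pow_mem_normalSpan_right (Nat.le_add_left 1 k) l))
      (Submodule.smul_mem _ _ (pow_mul_pow_mem_normalSpan_right hk l))

theorem right_mul_mem_normalSpan (h : IsTwistPair m b A B) (hm0 : IsUnit m)
    (hm1 : IsUnit (m - 1)) {w : R} (hw : w ∈ normalSpan K A B ⁅A, B⁆) :
    B * w ∈ normalSpan K A B ⁅A, B⁆ := by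
  have hB (k l : ℕ) (hk : 1 ≤ k) : B * (B ^ l * ⁅A, B⁆ ^ k) ∈ normalSpan K A B ⁅A, B⁆ := by
    rw [← mul_assoc, ← pow_succ']
    exact pow_mul_pow_mem_normalSpan_right hk _
  refine mul_mem_of_mem_normalSpan (fun k l hk => ?_) hB hw
  cases l with
  | zero => simpa using hB k 0 hk
  | succ l =>
    rw [← Submodule.smul_mem_iff_of_isUnit _ ((hm0.pow k).mul hm1),
      h.smul_right_mul_lie_pow_mul_pow]
    exact Submodule.sub_mem _ (pow_mul_pow_mem_normalSpan_left (Nat.le_add_left 1 k) l)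
      (Submodule.smul_mem _ _ (pow_mul_pow_mem_normalSpan_left hk l))

theorem mul_mem_normalSpan_of_mem_adjoin (h : IsTwistPair m b A B) (hm0 : IsUnit m)
    (hm1 : IsUnit (m - 1)) {p w : R} (hp : p ∈ Algebra.adjoin K {A, B})
    (hw : w ∈ normalSpan K A B ⁅A, B⁆) : p * w ∈ normalSpan K A B ⁅A, B⁆ := by
  refine mul_mem_of_mem_adjoin ?_ hp hw
  rintro _ (rfl | rfl) _ hw
  · exact h.left_mul_mem_normalSpan hm1 hw
  · exact h.right_mul_mem_normalSpan hm0 hm1 hw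

end IsTwistPair

theorem isTwistPair_genA_genB (F : Type*) [Field F] (m b : F) :
    IsTwistPair m b (genA F m b) (genB F m b) := by
  have h := RingQuot.mkAlgHom_rel F (s := twistRel F m b) ⟨rfl, rfl⟩
  rwa [map_mul, map_add, map_smul, map_mul, AlgHom.commutes] at h

theorem stmt17_general {K R : Type*} [CommRing K] [Ring R] [Algebra K R] {m b : K} {A B : R}
    (h : IsTwistPair m b A B) (hm0 : IsUnit m) (hm1 : IsUnit (m - 1)) (u v y : ℕ) {x : ℕ}
    (hx : 1 ≤ x) :
    ⁅⁅A, B⁆ ^ u * A ^ v, B ^ y * ⁅A, B⁆ ^ x⁆ ∈ normalSpan K A B ⁅A, B⁆ := by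
  have hA : A ∈ Algebra.adjoin K {A, B} := Algebra.subset_adjoin (.inl rfl)
  have hB : B ∈ Algebra.adjoin K {A, B} := Algebra.subset_adjoin (.inr rfl)
  have hC : ⁅A, B⁆ ∈ Algebra.adjoin K {A, B} := sub_mem (mul_mem hA hB) (mul_mem hB hA)
  have hAB : ⁅A, B⁆ ^ u * A ^ v * (B ^ y * ⁅A, B⁆ ^ x) ∈ normalSpan K A B ⁅A, B⁆ :=
    h.mul_mem_normalSpan_of_mem_adjoin hm0 hm1 (mul_mem (pow_mem hC u) (pow_mem hA v))
      (pow_mul_pow_mem_normalSpan_right hx y)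
  have hBA : B ^ y * ⁅A, B⁆ ^ x * (⁅A, B⁆ ^ u * A ^ v) ∈ normalSpan K A B ⁅A, B⁆ := by
    rw [mul_assoc, ← mul_assoc (⁅A, B⁆ ^ x), ← pow_add]
    exact h.mul_mem_normalSpan_of_mem_adjoin hm0 hm1 (pow_mem hB y)
      (pow_mul_pow_mem_normalSpan_left (hx.trans (Nat.le_add_right x u)) v)
  exact Submodule.sub_mem _ hAB hBA

theorem stmt17 (F : Type*) [Field F] (m b : F) (hm0 : m ≠ 0) (hm1 : m ≠ 1)
    (u v x y : ℕ) (hu : 1 ≤ u) (hv : 1 ≤ v) (hx : 1 ≤ x) (hy : 1 ≤ y) :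
    ⁅genC F m b ^ u * genA F m b ^ v, genB F m b ^ y * genC F m b ^ x⁆ ∈
      Submodule.span F
        ({w | ∃ k : ℕ, 1 ≤ k ∧ w = genC F m b ^ k} ∪
         {w | ∃ k l : ℕ, 1 ≤ k ∧ 1 ≤ l ∧ w = genC F m b ^ k * genA F m b ^ l} ∪
         {w | ∃ k l : ℕ, 1 ≤ k ∧ 1 ≤ l ∧ w = genB F m b ^ l * genC F m b ^ k}) :=
  stmt17_general (isTwistPair_genA_genB F m b) hm0.isUnit (sub_ne_zero.mpr hm1).isUnit u v y hx
end
end
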